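/- arXiv:1711.10392 — 3 statements merged into one kernel-verified Lean document; each statement's English description precedes it below -/
import Mathlib

section
/- Let n ≥ 1, E = EuclideanSpace ℝ (Fin (n+1)), let W ⊆ E be a linear subspace with finrank W = n, and let x ∈ E be such that the affine subspace {x + w : w ∈ W} is disjoint from the closed unit ball centered at the origin. If σ ∈ E satisfies ‖σ‖ = 1 and ⟪x, σ⟫ = 1, then there exists w ∈ W with ⟪σ, w⟫ ≠ 0 (equivalently, the orthogonal projection of σ onto W is nonzero). -/
open scoped InnerProductSpace

/-!
A hyperplane `W` orthogonal to the unit vector `σ` is all of `σᗮ`, so `⟪x, σ⟫ = 1` makes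
`x + W` the tangent hyperplane of the unit sphere at `σ`. In particular `x + W` touches the
sphere at `σ`, against the disjointness hypothesis.
-/

section Hyperplane

variable {K V : Type*} [DivisionRing K] [AddCommGroup V] [Module K V]

theorem isCoatom_iff_finrank_quotient_eq_one {W : Submodule K V} :
    IsCoatom W ↔ Module.finrank K (V ⧸ W) = 1 :=
  isSimpleModule_iff_isCoatom.symm.trans isSimpleModule_iff_finrank_eq_one

theorem isCoatom_of_finrank_add_one_eq {W : Submodule K V}
    (h : Module.finrank K W + 1 = Module.finrank K V) : IsCoatom W := by
  have : FiniteDimensional K V := Module.finite_of_finrank_pos (by lia)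
  have hquot := W.finrank_quotient_add_finrank
  exact isCoatom_iff_finrank_quotient_eq_one.mpr (by lia)

end Hyperplane

section InnerProduct

variable {𝕜 E : Type*} [RCLike 𝕜] [NormedAddCommGroup E] [InnerProductSpace 𝕜 E]
  {W : Submodule 𝕜 E} {v x y : E}

theorem eq_orthogonal_span_singleton_of_isCoatom (hW : IsCoatom W) (hv : v ≠ 0)
    (hvW : ∀ w ∈ W, ⟪v, w⟫_𝕜 = 0) : W = (𝕜 ∙ v)ᗮ := by
  have hle : W ≤ (𝕜 ∙ v)ᗮ := fun w hw ↦
    Submodule.mem_orthogonal_singleton_iff_inner_right.mpr (hvW w hw)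
  have hne_top : (𝕜 ∙ v)ᗮ ≠ ⊤ := by
    rwa [Ne, Submodule.orthogonal_eq_top_iff, Submodule.span_singleton_eq_bot]
  exact ((hW.le_iff_eq hne_top).mp hle).symm

theorem sub_mem_orthogonal_span_singleton_iff :
    y - x ∈ (𝕜 ∙ v)ᗮ ↔ ⟪v, y⟫_𝕜 = ⟪v, x⟫_𝕜 := by
  rw [Submodule.mem_orthogonal_singleton_iff_inner_right, inner_sub_right, sub_eq_zero]

theorem dxPhi_ne_zero_general (hW : IsCoatom W)
    (hdisj : Disjoint {z : E | ∃ w ∈ W, z = x + w} (Metric.sphere 0 1))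
    {σ : E} (hσ : ‖σ‖ = 1) (hxσ : ⟪x, σ⟫_𝕜 = 1) : ∃ w ∈ W, ⟪σ, w⟫_𝕜 ≠ 0 := by
  by_contra! hσW
  have hσ_ne : σ ≠ 0 := norm_ne_zero_iff.mp (by simp [hσ])
  have hW_eq : W = (𝕜 ∙ σ)ᗮ := eq_orthogonal_span_singleton_of_isCoatom hW hσ_ne hσW
  have hinner : ⟪σ, σ⟫_𝕜 = ⟪σ, x⟫_𝕜 := by
    rw [inner_self_eq_one_of_norm_eq_one hσ, ← inner_conj_symm, hxσ, map_one]
  have hmem : σ - x ∈ W := hW_eq ▸ sub_mem_orthogonal_span_singleton_iff.mpr hinner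
  exact Set.disjoint_left.mp hdisj ⟨σ - x, hmem, (add_sub_cancel x σ).symm⟩
    (mem_sphere_zero_iff_norm.mpr hσ)

end InnerProduct

/-- If the affine subspace `x + W` (with `W` of codimension one) avoids the
closed unit ball, then every tangency point `σ` of a tangent hyperplane of the
unit sphere through `x` has nonzero orthogonal projection on `W`: the covector
`d_xΦ(x,σ)` does not vanish on `W = T_x X`. -/
theorem dxPhi_ne_zero (n : ℕ) (hn : 1 ≤ n)
    (W : Submodule ℝ (EuclideanSpace ℝ (Fin (n + 1))))
    (hW : Module.finrank ℝ W = n)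
    (x : EuclideanSpace ℝ (Fin (n + 1)))
    (hdisj : Disjoint {z : EuclideanSpace ℝ (Fin (n + 1)) | ∃ w ∈ W, z = x + w}
      (Metric.closedBall (0 : EuclideanSpace ℝ (Fin (n + 1))) 1))
    (σ : EuclideanSpace ℝ (Fin (n + 1))) (hσ : ‖σ‖ = 1) (hxσ : ⟪x, σ⟫_ℝ = 1) :
    ∃ w ∈ W, ⟪σ, w⟫_ℝ ≠ 0 :=
  dxPhi_ne_zero_general (isCoatom_of_finrank_add_one_eq (by simp [hW]))
    (hdisj.mono_right Metric.sphere_subset_closedBall) hσ hxσ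
end

section
/- Let n ≥ 1 and E = EuclideanSpace ℝ (Fin (n+1)). Let x, y ∈ E with x ≠ y and ‖y‖ > 1. Then the line {y + t • (x − y) : t ∈ ℝ} through x and y is disjoint from the closed unit ball centered at the origin if and only if there exist σ₁, σ₂ ∈ E with ‖σ₁‖ = ‖σ₂‖ = 1, ⟪y, σ₁⟫ = 1, ⟪y, σ₂⟫ = 1, and ⟪x − y, σ₁⟫ > 0 while ⟪x − y, σ₂⟫ < 0. -/
open scoped InnerProductSpace

/-! Both conditions say that some `τ` in the open unit ball satisfies `⟪z, τ⟫ = 1` for every `z` on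
the line. If the line misses the ball, take `τ = p / ‖p‖²` for the point `p` of the line nearest to
the origin; conversely such a `τ` forces `1 < ‖z‖` by the Cauchy–Schwarz inequality. If
`⟪x - y, ·⟫` changes sign on `Z(y)`, take for `τ` the point where it vanishes on a chord joining
points of opposite sign; conversely, from `τ` follow a direction orthogonal to `y`, forwards and
backwards, until it leaves the ball. -/

theorem exists_mem_openSegment_eq_zero {𝕜 E : Type*} [Field 𝕜] [LinearOrder 𝕜]
    [IsStrictOrderedRing 𝕜] [AddCommGroup E] [Module 𝕜 E] (f : E →ᵃ[𝕜] 𝕜) {u v : E}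
    (hu : 0 < f u) (hv : f v < 0) : ∃ z ∈ openSegment 𝕜 u v, f z = 0 := by
  have h : (0 : 𝕜) ∈ f '' openSegment 𝕜 u v := by
    rw [image_openSegment, openSegment_symm, openSegment_eq_Ioo (hv.trans hu)]
    exact ⟨hv, hu⟩
  exact h

theorem exists_pos_norm_add_smul_eq {E : Type*} [NormedAddCommGroup E] [NormedSpace ℝ E]
    {v w : E} {r : ℝ} (hv : ‖v‖ < r) (hw : w ≠ 0) : ∃ s : ℝ, 0 < s ∧ ‖v + s • w‖ = r := by
  have hw' : 0 < ‖w‖ := norm_pos_iff.mpr hw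
  set b := (r + ‖v‖) / ‖w‖
  have hb : 0 ≤ b := div_nonneg (by linarith [norm_nonneg v]) hw'.le
  have hend : r ≤ ‖v + b • w‖ :=
    calc r = ‖b • w‖ - ‖v‖ := by
          rw [norm_smul, Real.norm_of_nonneg hb, div_mul_cancel₀ _ hw'.ne', add_sub_cancel_right]
      _ ≤ ‖b • w + v‖ := norm_sub_le_norm_add _ _
      _ = ‖v + b • w‖ := by rw [add_comm]
  have hcont : ContinuousOn (fun s : ℝ ↦ ‖v + s • w‖) (Set.Icc 0 b) := by fun_prop
  obtain ⟨s, hs, hsr⟩ := intermediate_value_Ioc hb hcont ⟨by simpa using hv, hend⟩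
  exact ⟨s, hs.1, hsr⟩

section

variable {V : Type*} [NormedAddCommGroup V] [InnerProductSpace ℝ V]

theorem exists_mem_orthogonal_inner_pos {K : Submodule ℝ V} [K.HasOrthogonalProjection] {d : V}
    (hd : d ∉ K) : ∃ w ∈ Kᗮ, 0 < ⟪d, w⟫_ℝ := by
  refine ⟨Kᗮ.starProjection d, Kᗮ.starProjection_apply_mem d, ?_⟩
  have hne : Kᗮ.starProjection d ≠ 0 := by
    rwa [Ne, Submodule.starProjection_apply_eq_zero_iff, K.orthogonal_orthogonal]
  calc 0 < ‖Kᗮ.starProjection d‖ ^ 2 := by positivity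
    _ = ⟪Kᗮ.starProjection d, d⟫_ℝ := (Kᗮ.re_inner_starProjection_eq_normSq d).symm
    _ = ⟪d, Kᗮ.starProjection d⟫_ℝ := real_inner_comm _ _

theorem forall_add_notMem_closedBall_iff_exists_mem_orthogonal (K : Submodule ℝ V)
    [K.HasOrthogonalProjection] (y : V) {r : ℝ} (hr : 0 < r) :
    (∀ z ∈ K, y + z ∉ Metric.closedBall 0 r) ↔ ∃ τ ∈ Kᗮ, ‖τ‖ < 1 ∧ ⟪y, τ⟫_ℝ = r := by
  simp only [mem_closedBall_zero_iff, not_le]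
  constructor
  · intro h
    set p := Kᗮ.starProjection y
    have hp : r < ‖p‖ := by
      have hp_eq : p = y + -K.starProjection y := by
        rw [← sub_eq_add_neg, ← Submodule.starProjection_orthogonal_val]
      rw [hp_eq]
      exact h _ (K.neg_mem (K.starProjection_apply_mem y))
    have hp₀ : 0 < ‖p‖ := hr.trans hp
    have hyp : ⟪y, p⟫_ℝ = ‖p‖ ^ 2 := by
      rw [real_inner_comm]
      exact Kᗮ.re_inner_starProjection_eq_normSq y
    refine ⟨(r / ‖p‖ ^ 2) • p, Kᗮ.smul_mem _ (Kᗮ.starProjection_apply_mem y), ?_, ?_⟩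
    · calc ‖(r / ‖p‖ ^ 2) • p‖ = r / ‖p‖ := by
            rw [norm_smul, Real.norm_of_nonneg (by positivity)]
            field_simp
        _ < 1 := (div_lt_one hp₀).mpr hp
    · rw [real_inner_smul_right, hyp, div_mul_cancel₀ _ (by positivity)]
  · rintro ⟨τ, hτK, hτ, hyτ⟩ z hz
    have hinner : ⟪y + z, τ⟫_ℝ = r := by
      rw [inner_add_left, hyτ, K.inner_right_of_mem_orthogonal hz hτK, add_zero]
    have hle : r ≤ ‖y + z‖ * ‖τ‖ := hinner ▸ real_inner_le_norm (y + z) τ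
    have hpos : 0 < ‖y + z‖ := pos_of_mul_pos_left (hr.trans_le hle) (norm_nonneg τ)
    exact hle.trans_lt (mul_lt_of_lt_one_right hpos hτ)

theorem forall_add_smul_notMem_closedBall_iff (y d : V) {r : ℝ} (hr : 0 < r) :
    (∀ t : ℝ, y + t • d ∉ Metric.closedBall 0 r) ↔
      ∃ τ : V, ⟪d, τ⟫_ℝ = 0 ∧ ‖τ‖ < 1 ∧ ⟪y, τ⟫_ℝ = r := by
  simpa only [Submodule.mem_span_singleton, forall_exists_index, forall_apply_eq_imp_iff,
    Submodule.mem_orthogonal_singleton_iff_inner_right] using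
    forall_add_notMem_closedBall_iff_exists_mem_orthogonal (ℝ ∙ d) y hr

/-- The set `Z(y)` of the paper, for the sphere of radius `r` centered at the origin: the unit
normals `σ` for which the tangent hyperplane `{z | ⟪z, σ⟫ = r}` passes through `y`. -/
def tangentNormals (r : ℝ) (y : V) : Set V := {σ | ‖σ‖ = 1 ∧ ⟪y, σ⟫_ℝ = r}

theorem exists_inner_eq_zero_norm_lt_one_of_sign_change {r : ℝ} {y d σ₁ σ₂ : V}
    (h₁ : σ₁ ∈ tangentNormals r y) (h₂ : σ₂ ∈ tangentNormals r y)
    (hpos : 0 < ⟪d, σ₁⟫_ℝ) (hneg : ⟪d, σ₂⟫_ℝ < 0) :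
    ∃ τ : V, ⟪d, τ⟫_ℝ = 0 ∧ ‖τ‖ < 1 ∧ ⟪y, τ⟫_ℝ = r := by
  obtain ⟨τ, hτ, hdτ⟩ :=
    exists_mem_openSegment_eq_zero (innerₗ V d).toAffineMap (u := σ₁) (v := σ₂) hpos hneg
  have hne : σ₁ ≠ σ₂ := by
    rintro rfl
    exact hneg.not_gt hpos
  have hball : τ ∈ Metric.ball 0 1 :=
    openSegment_subset_ball_of_ne (mem_closedBall_zero_iff.mpr h₁.1.le)
      (mem_closedBall_zero_iff.mpr h₂.1.le) hne hτ
  have hyτ : ⟪y, τ⟫_ℝ = r :=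
    (convex_hyperplane (innerₗ V y).isLinear r).openSegment_subset h₁.2 h₂.2 hτ
  exact ⟨τ, hdτ, mem_ball_zero_iff.mp hball, hyτ⟩

theorem exists_mem_tangentNormals_inner_pos {r : ℝ} {y d τ : V} (hd : d ∉ ℝ ∙ y) (hτ : ‖τ‖ < 1)
    (hyτ : ⟪y, τ⟫_ℝ = r) (hdτ : 0 ≤ ⟪d, τ⟫_ℝ) : ∃ σ ∈ tangentNormals r y, 0 < ⟪d, σ⟫_ℝ := by
  obtain ⟨w, hyw, hdw⟩ := exists_mem_orthogonal_inner_pos hd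
  rw [Submodule.mem_orthogonal_singleton_iff_inner_right] at hyw
  have hw : w ≠ 0 := by
    rintro rfl
    simp at hdw
  obtain ⟨s, hs, hnorm⟩ := exists_pos_norm_add_smul_eq hτ hw
  refine ⟨τ + s • w, ⟨hnorm, ?_⟩, ?_⟩
  · rw [inner_add_right, real_inner_smul_right, hyτ, hyw, mul_zero, add_zero]
  · rw [inner_add_right, real_inner_smul_right]
    positivity

theorem tangentNormals_sign_change_iff {r : ℝ} (hr : r ≠ 0) {y d : V} (hd : d ≠ 0) :
    (∃ σ₁ ∈ tangentNormals r y, ∃ σ₂ ∈ tangentNormals r y, 0 < ⟪d, σ₁⟫_ℝ ∧ ⟪d, σ₂⟫_ℝ < 0) ↔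
      ∃ τ : V, ⟪d, τ⟫_ℝ = 0 ∧ ‖τ‖ < 1 ∧ ⟪y, τ⟫_ℝ = r := by
  constructor
  · rintro ⟨σ₁, h₁, σ₂, h₂, hpos, hneg⟩
    exact exists_inner_eq_zero_norm_lt_one_of_sign_change h₁ h₂ hpos hneg
  · rintro ⟨τ, hdτ, hτ, hyτ⟩
    have hdy : d ∉ ℝ ∙ y := by
      intro hmem
      obtain ⟨c, rfl⟩ := Submodule.mem_span_singleton.mp hmem
      rw [real_inner_smul_left, hyτ] at hdτ
      exact (smul_ne_zero_iff.mp hd).1 ((mul_eq_zero_iff_right hr).mp hdτ)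
    obtain ⟨σ₁, h₁, hpos⟩ := exists_mem_tangentNormals_inner_pos hdy hτ hyτ hdτ.ge
    obtain ⟨σ₂, h₂, hneg⟩ := exists_mem_tangentNormals_inner_pos (d := -d)
      (by rwa [neg_mem_iff]) hτ hyτ (by rw [inner_neg_left, hdτ, neg_zero])
    rw [inner_neg_left, neg_pos] at hneg
    exact ⟨σ₁, h₁, σ₂, h₂, hpos, hneg⟩

theorem line_misses_ball_iff_sign_change_general {r : ℝ} (hr : 0 < r) {x y : V} (hxy : x ≠ y) :
    (∀ t : ℝ, y + t • (x - y) ∉ Metric.closedBall 0 r) ↔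
      ∃ σ₁ ∈ tangentNormals r y, ∃ σ₂ ∈ tangentNormals r y,
        0 < ⟪x - y, σ₁⟫_ℝ ∧ ⟪x - y, σ₂⟫_ℝ < 0 :=
  (forall_add_smul_notMem_closedBall_iff y (x - y) hr).trans
    (tangentNormals_sign_change_iff hr.ne' (sub_ne_zero.mpr hxy)).symm

end

/-- Geometric core of Lemma 2: for `‖y‖ > 1`, the line through `x ≠ y` avoids
the closed unit ball iff `Φ(x,·) = ⟪x − y, ·⟫` changes sign on
`Z(y) = {σ : ‖σ‖ = 1, ⟪y, σ⟫ = 1}`. -/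
theorem line_misses_ball_iff_sign_change (n : ℕ) (hn : 1 ≤ n)
    (x y : EuclideanSpace ℝ (Fin (n + 1))) (hxy : x ≠ y) (hy : 1 < ‖y‖) :
    (∀ t : ℝ, y + t • (x - y) ∉
        Metric.closedBall (0 : EuclideanSpace ℝ (Fin (n + 1))) 1) ↔
      ∃ σ₁ σ₂ : EuclideanSpace ℝ (Fin (n + 1)),
        ‖σ₁‖ = 1 ∧ ‖σ₂‖ = 1 ∧ ⟪y, σ₁⟫_ℝ = 1 ∧ ⟪y, σ₂⟫_ℝ = 1 ∧
        0 < ⟪x - y, σ₁⟫_ℝ ∧ ⟪x - y, σ₂⟫_ℝ < 0 := by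
  rw [line_misses_ball_iff_sign_change_general one_pos hxy]
  grind [tangentNormals]
end

section
/- Let m ≥ 1 and let s ∈ EuclideanSpace ℝ (Fin m) with s ≠ 0. Let μ be the (m−1)-dimensional Hausdorff measure restricted to the unit sphere {ω : ‖ω‖ = 1} in EuclideanSpace ℝ (Fin m). Then the real part of i^m · ∫_{‖ω‖=1} (⟪s, ω⟫ − iε)^{−m} dμ(ω) tends to 0 as ε → 0⁺; i.e. Tendsto (fun ε : ℝ => (Complex.I ^ m * ∫ ω in {ω : ‖ω‖ = 1}, ((⟪s, ω⟫ : ℂ) − ε * Complex.I) ^ (−(m : ℤ)) ∂μ).re) (𝓝[>] 0) (𝓝 0). -/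
open scoped InnerProductSpace
open MeasureTheory Filter Topology

/-!
For `‖b‖ < 1` the region `‖x‖ + ⟪b, x⟫ < 1` is an ellipsoid with a focus at the origin. Computing
its volume in polar coordinates, and as a linear image of the ball, gives
`∫ (1 + ⟪b, ω⟫)⁻ⁿ = (1 - ‖b‖²)^(-(n+1)/2) · area` over the unit sphere of an `n`-dimensional space.
Both sides continue analytically along `z ↦ z • b`; at `z = i / ε` this becomes
`|∫ (⟪s, ω⟫ - iε)⁻ⁿ| = ε (ε² + ‖s‖²)^(-(n+1)/2) · area`, which tends to `0` with `ε`.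
The identity passes from the surface measure defined by polar coordinates to the Hausdorff measure
because both are invariant under rotations; the latter is finite by stereographic projection.
-/

open Metric Set Module

section PositivelyHomogeneous

variable {E : Type*} [NormedAddCommGroup E] [NormedSpace ℝ E] [FiniteDimensional ℝ E]
  [MeasurableSpace E] [BorelSpace E]

lemma finrank_mul_addHaar_lt_one_eq_lintegral_toSphere (μ : Measure E) [μ.IsAddHaarMeasure]
    {g : E → ℝ} (hg : Measurable g) (hpos : ∀ x, ‖x‖ = 1 → 0 < g x)
    (hsmul : ∀ r : ℝ, 0 < r → ∀ x, g (r • x) = r * g x) :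
    finrank ℝ E * μ {x | g x < 1} =
      ∫⁻ ω, ENNReal.ofReal ((g ω ^ finrank ℝ E)⁻¹) ∂μ.toSphere := by
  nontriviality E
  set n := finrank ℝ E with hn
  have hn0 : 0 < n := finrank_pos
  let S : Set (sphere (0 : E) 1 × Ioi (0 : ℝ)) := {p | p.2.1 * g p.1 < 1}
  have hS : MeasurableSet S := measurableSet_lt (by fun_prop) measurable_const
  have preimage_S : homeomorphUnitSphereProd E ⁻¹' S = Subtype.val ⁻¹' {x | g x < 1} := by
    ext x
    simp [S, ← hsmul _ (norm_pos_iff.2 x.2), smul_smul, norm_ne_zero_iff.2 x.2]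
  have slice (ω : sphere (0 : E) 1) : Measure.volumeIoiPow (n - 1) (Prod.mk ω ⁻¹' S) =
      ENNReal.ofReal ((g ω ^ n)⁻¹ / n) := by
    have hω : 0 < g ω := hpos ω (norm_eq_of_mem_sphere ω)
    have : Prod.mk ω ⁻¹' S = Iio ⟨(g ω)⁻¹, inv_pos.2 hω⟩ := by
      ext r
      change r.1 * g ω < 1 ↔ r.1 < (g ω)⁻¹
      rw [← one_div, lt_div_iff₀ hω]
    rw [this, Measure.volumeIoiPow_apply_Iio]
    simp [Nat.sub_add_cancel hn0, Nat.cast_pred hn0]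
  calc n * μ {x | g x < 1}
      = n * (μ.comap (↑)) (Subtype.val ⁻¹' {x | g x < 1} : Set ({0}ᶜ : Set E)) := by
        rw [comap_subtype_coe_apply (measurableSet_singleton _).compl,
          Subtype.image_preimage_coe, inter_comm, ← Set.sdiff_eq,
          measure_sdiff_null (measure_singleton _)]
    _ = n * ∫⁻ ω, ENNReal.ofReal ((g ω ^ n)⁻¹ / n) ∂μ.toSphere := by
        rw [← preimage_S, μ.measurePreserving_homeomorphUnitSphereProd.measure_preimage
          hS.nullMeasurableSet, Measure.prod_apply hS]
        simp_rw [← hn, slice]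
    _ = ∫⁻ ω, ENNReal.ofReal ((g ω ^ n)⁻¹) ∂μ.toSphere := by
        rw [← lintegral_const_mul _ (by fun_prop)]
        refine lintegral_congr fun ω ↦ ?_
        rw [← ENNReal.ofReal_natCast, ← ENNReal.ofReal_mul n.cast_nonneg,
          mul_div_cancel₀ _ (by positivity)]

end PositivelyHomogeneous

section Ellipsoid

variable {E : Type*} [NormedAddCommGroup E] [InnerProductSpace ℝ E]

/-- For `‖b‖ < 1`, the linear part of the affine map sending the ellipsoid
`{x | ‖x‖ + ⟪b, x⟫ < 1}` onto the unit ball; the translation part is `b`. -/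
noncomputable def ellipsoidMap (b : E) : E →ₗ[ℝ] E :=
  √(1 - ‖b‖ ^ 2) • LinearMap.transvection (innerₗ E b) (-(1 + √(1 - ‖b‖ ^ 2))⁻¹ • b)

lemma det_ellipsoidMap [FiniteDimensional ℝ E] {b : E} (hb : ‖b‖ ≤ 1) :
    LinearMap.det (ellipsoidMap b) = √(1 - ‖b‖ ^ 2) ^ (finrank ℝ E + 1) := by
  have hsq := Real.sq_sqrt (show 0 ≤ 1 - ‖b‖ ^ 2 by nlinarith [norm_nonneg b])
  set γ := √(1 - ‖b‖ ^ 2) with hγ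
  have hγ0 : 0 ≤ γ := Real.sqrt_nonneg _
  have : 1 + innerₗ E b (-(1 + γ)⁻¹ • b) = γ := by
    rw [map_smul, innerₗ_apply_apply, real_inner_self_eq_norm_sq, smul_eq_mul]
    field_simp
    linarith
  rw [ellipsoidMap, ← hγ, LinearMap.det_smul, LinearMap.transvection.det, this, pow_succ]

lemma norm_ellipsoidMap_add_sq {b : E} (hb : ‖b‖ ≤ 1) (x : E) :
    ‖ellipsoidMap b x + b‖ ^ 2 = 1 - (1 - ‖b‖ ^ 2) * ((1 - ⟪b, x⟫_ℝ) ^ 2 - ‖x‖ ^ 2) := by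
  have hsq := Real.sq_sqrt (show 0 ≤ 1 - ‖b‖ ^ 2 by nlinarith [norm_nonneg b])
  rw [ellipsoidMap]
  set γ := √(1 - ‖b‖ ^ 2)
  have hγ0 : 0 ≤ γ := Real.sqrt_nonneg _
  have hb2 : ‖b‖ ^ 2 = 1 - γ ^ 2 := by linarith
  rw [← hsq]
  simp only [LinearMap.smul_apply, LinearMap.transvection.apply, innerₗ_apply_apply, smul_add,
    smul_smul, norm_add_sq_real, inner_add_left, real_inner_smul_left, real_inner_smul_right,
    norm_smul, mul_pow, Real.norm_eq_abs, sq_abs, real_inner_self_eq_norm_sq, hb2,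
    real_inner_comm b x]
  field_simp
  ring

lemma norm_add_inner_lt_one_iff {b : E} (hb : ‖b‖ < 1) (x : E) :
    ‖x‖ + ⟪b, x⟫_ℝ < 1 ↔ ‖ellipsoidMap b x + b‖ < 1 := by
  have hb2 : 0 < 1 - ‖b‖ ^ 2 := by nlinarith [norm_nonneg b]
  have hinner : ⟪b, x⟫_ℝ ≤ ‖x‖ := (real_inner_le_norm b x).trans
    (mul_le_of_le_one_left (norm_nonneg x) hb.le)
  rw [← sq_lt_one_iff₀ (norm_nonneg _), norm_ellipsoidMap_add_sq hb.le, sub_lt_self_iff,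
    mul_pos_iff_of_pos_left hb2, sub_pos, sq_lt_sq, abs_norm, lt_abs]
  constructor
  · exact fun h ↦ Or.inl (by linarith)
  · rintro (h | h) <;> linarith

variable [FiniteDimensional ℝ E] [MeasurableSpace E] [BorelSpace E]

lemma addHaar_norm_add_inner_lt_one (μ : Measure E) [μ.IsAddHaarMeasure] {b : E} (hb : ‖b‖ < 1) :
    μ {x | ‖x‖ + ⟪b, x⟫_ℝ < 1} =
      ENNReal.ofReal ((√(1 - ‖b‖ ^ 2) ^ (finrank ℝ E + 1))⁻¹) * μ (ball 0 1) := by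
  have hdet : 0 < LinearMap.det (ellipsoidMap b) := by
    have : 0 < 1 - ‖b‖ ^ 2 := by nlinarith [norm_nonneg b]
    rw [det_ellipsoidMap hb.le]
    positivity
  have hset : {x | ‖x‖ + ⟪b, x⟫_ℝ < 1} = ellipsoidMap b ⁻¹' ball (-b) 1 := by
    ext x
    simp [norm_add_inner_lt_one_iff hb, dist_eq_norm]
  rw [hset, Measure.addHaar_preimage_linearMap μ hdet.ne', abs_inv, abs_of_pos hdet,
    det_ellipsoidMap hb.le, Measure.addHaar_ball_center]

lemma lintegral_toSphere_one_add_inner (μ : Measure E) [μ.IsAddHaarMeasure] {b : E}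
    (hb : ‖b‖ < 1) :
    ∫⁻ ω, ENNReal.ofReal (((1 + ⟪b, (ω : E)⟫_ℝ) ^ finrank ℝ E)⁻¹) ∂μ.toSphere =
      ENNReal.ofReal ((√(1 - ‖b‖ ^ 2) ^ (finrank ℝ E + 1))⁻¹) * μ.toSphere univ := by
  have hpolar := finrank_mul_addHaar_lt_one_eq_lintegral_toSphere μ
    (g := fun x ↦ ‖x‖ + ⟪b, x⟫_ℝ) (by fun_prop)
    (fun x hx ↦ by
      have := neg_le_of_abs_le (abs_real_inner_le_norm b x)
      rw [hx, mul_one] at this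
      rw [hx]
      linarith)
    (fun r hr x ↦ by rw [norm_smul, Real.norm_of_nonneg hr.le, real_inner_smul_right, mul_add])
  simp only [norm_eq_of_mem_sphere] at hpolar
  rw [← hpolar, addHaar_norm_add_inner_lt_one μ hb, Measure.toSphere_apply_univ, mul_left_comm]

end Ellipsoid

section Holomorphy

lemma one_sub_abs_re_mul_le_norm_one_add_mul (z : ℂ) (x : ℝ) :
    1 - |z.re| * |x| ≤ ‖1 + z * x‖ := by
  calc 1 - |z.re| * |x| ≤ 1 + z.re * x := by linarith [neg_abs_le (z.re * x), abs_mul z.re x]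
    _ = (1 + z * x).re := by simp
    _ ≤ ‖1 + z * x‖ := Complex.re_le_norm _

lemma hasDerivAt_one_add_mul_pow_inv (n : ℕ) (c : ℂ) {z : ℂ} (hz : 1 + z * c ≠ 0) :
    HasDerivAt (fun w : ℂ ↦ ((1 + w * c) ^ n)⁻¹) (-(n * c) * ((1 + z * c) ^ (n + 1))⁻¹) z := by
  have hpow : HasDerivAt (fun w : ℂ ↦ (1 + w * c) ^ n) (n * (1 + z * c) ^ (n - 1) * c) z := by
    simpa using (((hasDerivAt_id' z).mul_const c).const_add 1).fun_pow n
  refine (hpow.inv (pow_ne_zero n hz)).congr_deriv ?_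
  rcases n with - | n
  · simp
  · rw [Nat.add_sub_cancel]
    field_simp
    ring

lemma differentiableOn_integral_one_add_mul_pow_inv {α : Type*} [MeasurableSpace α] {μ : Measure α}
    [IsFiniteMeasure μ] {X : α → ℝ} (hX : AEMeasurable X μ) {C : ℝ}
    (hC : ∀ᵐ a ∂μ, |X a| ≤ C) (n : ℕ) :
    DifferentiableOn ℂ (fun z : ℂ ↦ ∫ a, ((1 + z * X a) ^ n)⁻¹ ∂μ) {z | |z.re| * C < 1} := by
  intro w hw
  obtain ⟨δ, hwδ, hδ⟩ := exists_between (show |w.re| * C < 1 from hw)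
  have hδ' : 0 < 1 - δ := sub_pos.2 hδ
  have hU : {z : ℂ | |z.re| * C < δ} ∈ 𝓝 w :=
    (isOpen_lt (by fun_prop) continuous_const).mem_nhds hwδ
  have hlower {a : α} (ha : |X a| ≤ C) {z : ℂ} (hz : |z.re| * C < δ) :
      1 - δ ≤ ‖1 + z * X a‖ := by
    refine le_trans ?_ (one_sub_abs_re_mul_le_norm_one_add_mul z (X a))
    linarith [mul_le_mul_of_nonneg_left ha (abs_nonneg z.re)]
  have hupper {a : α} (ha : |X a| ≤ C) {z : ℂ} (hz : |z.re| * C < δ) (k : ℕ) :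
      ‖((1 + z * X a) ^ k)⁻¹‖ ≤ ((1 - δ) ^ k)⁻¹ := by
    rw [norm_inv, norm_pow]
    gcongr
    exact hlower ha hz
  have hmeas (z : ℂ) (k : ℕ) : AEStronglyMeasurable (fun a ↦ ((1 + z * X a) ^ k)⁻¹) μ := by
    fun_prop
  refine (hasDerivAt_integral_of_dominated_loc_of_deriv_le
    (F' := fun z a ↦ -(n * X a) * ((1 + z * X a) ^ (n + 1))⁻¹)
    (bound := fun _ ↦ n * C * ((1 - δ) ^ (n + 1))⁻¹) hU (.of_forall fun z ↦ hmeas z n)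
    (.of_bound (hmeas w n) ((1 - δ) ^ n)⁻¹ (hC.mono fun a ha ↦ hupper ha hwδ n))
    (.mul (by fun_prop) (hmeas w (n + 1))) ?_ (integrable_const _)
    ?_).2.differentiableAt.differentiableWithinAt
  · filter_upwards [hC] with a ha z hz
    rw [norm_mul, norm_neg, norm_mul, Complex.norm_natCast, Complex.norm_real, Real.norm_eq_abs]
    have := (abs_nonneg _).trans ha
    gcongr
    exact hupper ha hz (n + 1)
  · filter_upwards [hC] with a ha z hz
    exact hasDerivAt_one_add_mul_pow_inv n _ (norm_pos_iff.1 (hδ'.trans_le (hlower ha hz)))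

end Holomorphy

section IsometryInvariant

/-- A measure on `E` that is carried by the unit sphere and invariant under all linear isometries;
for finite measures, this means a multiple of the surface measure. -/
structure IsUniformOnSphere {E : Type*} [NormedAddCommGroup E] [InnerProductSpace ℝ E]
    [MeasurableSpace E] (μ : Measure E) : Prop where
  ae_norm_eq_one : ∀ᵐ x ∂μ, ‖x‖ = 1
  measurePreserving (e : E ≃ₗᵢ[ℝ] E) : MeasurePreserving e μ μ

variable {E : Type*} [NormedAddCommGroup E] [InnerProductSpace ℝ E]
  [MeasurableSpace E] {μ : Measure E}

lemma IsUniformOnSphere.ae_abs_inner_le (hμ : IsUniformOnSphere μ) (b : E) :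
    ∀ᵐ x ∂μ, |⟪b, x⟫_ℝ| ≤ ‖b‖ := by
  filter_upwards [hμ.ae_norm_eq_one] with x hx
  simpa [hx] using abs_real_inner_le_norm b x

variable [BorelSpace E]

lemma isUniformOnSphere_hausdorffMeasure_restrict (d : ℝ) :
    IsUniformOnSphere (μH[d].restrict (sphere (0 : E) 1)) where
  ae_norm_eq_one := by
    filter_upwards [ae_restrict_mem isClosed_sphere.measurableSet] with x hx
    exact mem_sphere_zero_iff_norm.1 hx
  measurePreserving e := by
    have h := (e.toIsometryEquiv.measurePreserving_hausdorffMeasure d).restrict_preimage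
      (isClosed_sphere (x := (0 : E)) (ε := 1)).measurableSet
    simpa using h

namespace IsUniformOnSphere

lemma lintegral_inner_eq_of_norm_eq (hμ : IsUniformOnSphere μ) (f : ℝ → ENNReal) {s t : E}
    (hst : ‖s‖ = ‖t‖) : ∫⁻ x, f ⟪s, x⟫_ℝ ∂μ = ∫⁻ x, f ⟪t, x⟫_ℝ ∂μ := by
  let e := (ℝ ∙ (s - t))ᗮ.reflection
  have he : e s = t := Submodule.reflection_sub hst
  rw [← (hμ.measurePreserving e).lintegral_comp_emb e.toHomeomorph.measurableEmbedding
    fun x ↦ f ⟪t, x⟫_ℝ]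
  simp_rw [← he, e.inner_map_map]

-- Average over the directions of `s` and exchange the two integrals.
lemma mul_lintegral_inner [SecondCountableTopology E] (hμ : IsUniformOnSphere μ) [SFinite μ]
    (ν : Measure (sphere (0 : E) 1)) [SFinite ν] {f : ℝ → ENNReal} (hf : Measurable f) {s : E}
    {c : ENNReal} (hc : ∀ t : E, ‖t‖ = ‖s‖ → ∫⁻ σ, f ⟪t, (σ : E)⟫_ℝ ∂ν = c) :
    ν univ * ∫⁻ x, f ⟪s, x⟫_ℝ ∂μ = c * μ univ := by
  have hnorm {u : E} (hu : ‖u‖ = 1) : ‖‖s‖ • u‖ = ‖s‖ := by rw [norm_smul, hu, norm_norm, mul_one]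
  calc ν univ * ∫⁻ x, f ⟪s, x⟫_ℝ ∂μ
      = ∫⁻ σ : sphere (0 : E) 1, ∫⁻ x, f ⟪‖s‖ • (σ : E), x⟫_ℝ ∂μ ∂ν := by
        simp_rw [hμ.lintegral_inner_eq_of_norm_eq f (hnorm (norm_eq_of_mem_sphere _)),
          lintegral_const, mul_comm]
    _ = ∫⁻ x, ∫⁻ σ : sphere (0 : E) 1, f ⟪‖s‖ • x, (σ : E)⟫_ℝ ∂ν ∂μ := by
        rw [lintegral_lintegral_swap (by fun_prop)]
        simp_rw [real_inner_smul_left, real_inner_comm]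
    _ = ∫⁻ _, c ∂μ :=
        lintegral_congr_ae (hμ.ae_norm_eq_one.mono fun x hx ↦ hc _ (hnorm hx))
    _ = c * μ univ := lintegral_const c

variable [FiniteDimensional ℝ E]

lemma lintegral_one_add_inner [Nontrivial E] [SFinite μ] (hμ : IsUniformOnSphere μ) {b : E}
    (hb : ‖b‖ < 1) :
    ∫⁻ x, ENNReal.ofReal (((1 + ⟪b, x⟫_ℝ) ^ finrank ℝ E)⁻¹) ∂μ =
      ENNReal.ofReal ((√(1 - ‖b‖ ^ 2) ^ (finrank ℝ E + 1))⁻¹) * μ univ := by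
  let ν := (Measure.addHaar : Measure E).toSphere
  have hν : ν univ ≠ 0 := Measure.measure_univ_ne_zero.2 (Measure.toSphere_ne_zero _)
  have h := hμ.mul_lintegral_inner ν (f := fun t ↦ ENNReal.ofReal (((1 + t) ^ finrank ℝ E)⁻¹))
    (by fun_prop) (s := b) fun t ht ↦ by
      rw [lintegral_toSphere_one_add_inner _ (ht.trans_lt hb), ht]
  rwa [mul_right_comm, mul_comm _ (ν univ), ENNReal.mul_right_inj hν (measure_ne_top ν univ)] at h

lemma integral_one_add_inner [Nontrivial E] [IsFiniteMeasure μ] (hμ : IsUniformOnSphere μ) {b : E}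
    (hb : ‖b‖ < 1) :
    ∫ x, ((1 + ⟪b, x⟫_ℝ) ^ finrank ℝ E)⁻¹ ∂μ =
      (√(1 - ‖b‖ ^ 2) ^ (finrank ℝ E + 1))⁻¹ * μ.real univ := by
  rw [integral_eq_lintegral_of_nonneg_ae ?_ (by fun_prop), hμ.lintegral_one_add_inner hb,
    ENNReal.toReal_mul, ENNReal.toReal_ofReal (by positivity), measureReal_def]
  filter_upwards [hμ.ae_abs_inner_le b] with x hx
  have : 0 ≤ 1 + ⟪b, x⟫_ℝ := by linarith [neg_le_of_abs_le hx]
  positivity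

lemma integral_one_add_ofReal_mul_inner_sq_mul [Nontrivial E] [IsFiniteMeasure μ]
    (hμ : IsUniformOnSphere μ) (b : E) {t : ℝ} (ht : |t| * ‖b‖ < 1) :
    (∫ x, ((1 + (t : ℂ) * ⟪b, x⟫_ℝ) ^ finrank ℝ E)⁻¹ ∂μ) ^ 2 *
      (1 - (t : ℂ) ^ 2 * ‖b‖ ^ 2) ^ (finrank ℝ E + 1) = (μ.real univ : ℂ) ^ 2 := by
  have htb : ‖t • b‖ < 1 := by rwa [norm_smul, Real.norm_eq_abs]
  have hpos : 0 < 1 - ‖t • b‖ ^ 2 := by nlinarith [norm_nonneg (t • b)]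
  have hsq : √(1 - ‖t • b‖ ^ 2) ^ 2 = 1 - t ^ 2 * ‖b‖ ^ 2 := by
    rw [Real.sq_sqrt hpos.le, norm_smul, mul_pow, Real.norm_eq_abs, sq_abs]
  have hint : ∫ x, ((1 + (t : ℂ) * ⟪b, x⟫_ℝ) ^ finrank ℝ E)⁻¹ ∂μ =
      ((√(1 - ‖t • b‖ ^ 2) ^ (finrank ℝ E + 1))⁻¹ * μ.real univ : ℝ) := by
    rw [← hμ.integral_one_add_inner htb, ← integral_complex_ofReal]
    push_cast [real_inner_smul_left]
    rfl
  rw [hint]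
  norm_cast
  rw [← hsq]
  field_simp
  ring

-- Both sides are holomorphic in `z` on the strip, so it suffices to compare them for real `z`;
-- squaring avoids the choice of a branch of the square root.
lemma integral_one_add_mul_inner_sq_mul [Nontrivial E] [IsFiniteMeasure μ]
    (hμ : IsUniformOnSphere μ) (b : E) {z : ℂ} (hz : |z.re| * ‖b‖ < 1) :
    (∫ x, ((1 + z * ⟪b, x⟫_ℝ) ^ finrank ℝ E)⁻¹ ∂μ) ^ 2 *
      (1 - z ^ 2 * ‖b‖ ^ 2) ^ (finrank ℝ E + 1) = (μ.real univ : ℂ) ^ 2 := by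
  let U : Set ℂ := {z | |z.re| * ‖b‖ < 1}
  have isOpen_U : IsOpen U := isOpen_lt (by fun_prop) continuous_const
  have isPreconnected_U : IsPreconnected U := by
    have : U = (‖b‖ • Complex.reLm) ⁻¹' ball 0 1 := by
      ext w
      simp [U, mul_comm]
    exact this ▸ ((convex_ball (0 : ℝ) 1).linear_preimage _).isPreconnected
  have zero_mem_U : (0 : ℂ) ∈ U := by simp [U]
  have hF : AnalyticOnNhd ℂ (fun w : ℂ ↦ (∫ x, ((1 + w * ⟪b, x⟫_ℝ) ^ finrank ℝ E)⁻¹ ∂μ) ^ 2 *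
      (1 - w ^ 2 * ‖b‖ ^ 2) ^ (finrank ℝ E + 1)) U :=
    (((differentiableOn_integral_one_add_mul_pow_inv (by fun_prop) (hμ.ae_abs_inner_le b) _).pow
      2).mul (by fun_prop)).analyticOnNhd isOpen_U
  have ofReal_tendsto : Tendsto ((↑) : ℝ → ℂ) (𝓝[≠] 0) (𝓝[≠] 0) :=
    Complex.continuous_ofReal.continuousWithinAt.tendsto_nhdsWithin fun t ht ↦
      Complex.ofReal_ne_zero.2 ht
  have ofReal_mem_U : ∀ᶠ t : ℝ in 𝓝[≠] 0, (t : ℂ) ∈ U :=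
    ofReal_tendsto.eventually <| eventually_nhdsWithin_of_eventually_nhds <|
      isOpen_U.mem_nhds zero_mem_U
  have hreal : ∃ᶠ w : ℂ in 𝓝[≠] 0, (∫ x, ((1 + w * ⟪b, x⟫_ℝ) ^ finrank ℝ E)⁻¹ ∂μ) ^ 2 *
      (1 - w ^ 2 * ‖b‖ ^ 2) ^ (finrank ℝ E + 1) = (μ.real univ : ℂ) ^ 2 :=
    ofReal_tendsto.frequently (ofReal_mem_U.mono fun t ht ↦
      hμ.integral_one_add_ofReal_mul_inner_sq_mul b (by simpa [U] using ht)).frequently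
  exact hF.eqOn_of_preconnected_of_frequently_eq analyticOnNhd_const isPreconnected_U zero_mem_U
    hreal hz

lemma norm_integral_inner_sub_mul_I_zpow [Nontrivial E] [IsFiniteMeasure μ]
    (hμ : IsUniformOnSphere μ) (s : E) {ε : ℝ} (hε : 0 < ε) :
    ‖∫ x, ((⟪s, x⟫_ℝ : ℂ) - ε * Complex.I) ^ (-(finrank ℝ E : ℤ)) ∂μ‖ =
      ε / √(ε ^ 2 + ‖s‖ ^ 2) ^ (finrank ℝ E + 1) * μ.real univ := by
  set n := finrank ℝ E
  have hpos : 0 < ε ^ 2 + ‖s‖ ^ 2 := by positivity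
  have hpull (x : E) : ((⟪s, x⟫_ℝ : ℂ) - ε * Complex.I) ^ (-(n : ℤ)) =
      ((-ε * Complex.I) ^ n)⁻¹ * ((1 + Complex.I / ε * ⟪s, x⟫_ℝ) ^ n)⁻¹ := by
    have : (ε : ℂ) ≠ 0 := mod_cast hε.ne'
    rw [zpow_neg, zpow_natCast, ← mul_inv, ← mul_pow]
    congr 2
    field_simp
    linear_combination (⟪s, x⟫_ℝ : ℂ) * Complex.I_sq
  have hfactor : 1 - (Complex.I / ε) ^ 2 * ‖s‖ ^ 2 = ((ε ^ 2 + ‖s‖ ^ 2) / ε ^ 2 : ℝ) := by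
    have : (ε : ℂ) ≠ 0 := mod_cast hε.ne'
    push_cast
    rw [div_pow, Complex.I_sq]
    field_simp
    ring
  have hnorm : ‖∫ x, ((1 + Complex.I / ε * ⟪s, x⟫_ℝ) ^ n)⁻¹ ∂μ‖ ^ 2 *
      ((ε ^ 2 + ‖s‖ ^ 2) / ε ^ 2) ^ (n + 1) = μ.real univ ^ 2 := by
    have h := congrArg norm (hμ.integral_one_add_mul_inner_sq_mul s (z := Complex.I / ε) (by simp))
    rwa [hfactor, norm_mul, norm_pow, norm_pow, norm_pow, Complex.norm_real, Complex.norm_real,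
      Real.norm_of_nonneg (by positivity), Real.norm_of_nonneg measureReal_nonneg] at h
  simp_rw [hpull]
  rw [integral_const_mul, norm_mul, norm_inv, norm_pow, norm_mul, norm_neg, Complex.norm_I,
    mul_one, Complex.norm_of_nonneg hε.le,
    ← pow_left_inj₀ (by positivity) (by positivity) two_ne_zero, mul_pow, mul_pow, ← hnorm,
    div_pow, div_pow, pow_right_comm _ _ 2, Real.sq_sqrt hpos.le]
  generalize ‖∫ x, ((1 + Complex.I / ε * ⟪s, x⟫_ℝ) ^ n)⁻¹ ∂μ‖ = A
  field_simp
  ring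

end IsUniformOnSphere

end IsometryInvariant

section HausdorffMeasure

variable {E : Type*} [NormedAddCommGroup E] [InnerProductSpace ℝ E]

lemma exists_stereoInvFun_eq_of_inner_nonpos {v : E} (hv : ‖v‖ = 1) {x : E} (hx : ‖x‖ = 1)
    (hvx : ⟪v, x⟫_ℝ ≤ 0) :
    ∃ w ∈ closedBall (0 : (ℝ ∙ v)ᗮ) 2, stereoInvFunAux v w = x := by
  have hne : x ≠ v := by
    rintro rfl
    rw [real_inner_self_eq_norm_sq, hx] at hvx
    norm_num at hvx
  refine ⟨stereoToFun v x, ?_, ?_⟩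
  · have hproj : ‖(ℝ ∙ v)ᗮ.orthogonalProjectionOnto x‖ ≤ 1 :=
      hx ▸ (ℝ ∙ v)ᗮ.norm_orthogonalProjectionOnto_apply_le x
    have hcoef : 2 / (1 - ⟪v, x⟫_ℝ) ≤ 2 := div_le_self zero_le_two (by linarith)
    have h0 : 0 ≤ 2 / (1 - ⟪v, x⟫_ℝ) := by apply div_nonneg <;> linarith
    rw [mem_closedBall_zero_iff, stereoToFun_apply, norm_smul, innerSL_apply_apply,
      Real.norm_of_nonneg h0]
    simpa using mul_le_mul hcoef hproj (norm_nonneg _) zero_le_two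
  · exact congrArg Subtype.val (stereo_left_inv hv (x := ⟨x, by simpa using hx⟩) hne)

variable [FiniteDimensional ℝ E] [MeasurableSpace E] [BorelSpace E]

lemma hausdorffMeasure_hemisphere_lt_top {v : E} (hv : ‖v‖ = 1) :
    μH[(finrank ℝ E : ℝ) - 1] {x : E | ‖x‖ = 1 ∧ ⟪v, x⟫_ℝ ≤ 0} < ⊤ := by
  let B := closedBall (0 : (ℝ ∙ v)ᗮ) 2
  let φ : (ℝ ∙ v)ᗮ → E := fun w ↦ stereoInvFunAux v w
  have hdim : (finrank ℝ E : ℝ) - 1 = finrank ℝ (ℝ ∙ v)ᗮ := by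
    have := (ℝ ∙ v).finrank_add_finrank_orthogonal
    rw [finrank_span_singleton (norm_ne_zero_iff.1 (hv ▸ one_ne_zero))] at this
    rw [← this]
    push_cast
    ring
  have hsub : {x : E | ‖x‖ = 1 ∧ ⟪v, x⟫_ℝ ≤ 0} ⊆ φ '' B :=
    fun x hx ↦ exists_stereoInvFun_eq_of_inner_nonpos hv hx.1 hx.2
  have hφ : ContDiff ℝ 1 φ := contDiff_stereoInvFunAux.comp (ℝ ∙ v)ᗮ.subtypeL.contDiff
  have hB : IsCompact B := isCompact_closedBall _ _
  obtain ⟨K, hK⟩ := hφ.contDiffOn.exists_lipschitzOnWith one_ne_zero (convex_closedBall 0 2) hB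
  rw [hdim]
  calc μH[finrank ℝ (ℝ ∙ v)ᗮ] {x : E | ‖x‖ = 1 ∧ ⟪v, x⟫_ℝ ≤ 0}
      ≤ μH[finrank ℝ (ℝ ∙ v)ᗮ] (φ '' B) := measure_mono hsub
    _ ≤ K ^ (finrank ℝ (ℝ ∙ v)ᗮ : ℝ) * μH[finrank ℝ (ℝ ∙ v)ᗮ] B :=
        hK.hausdorffMeasure_image_le (Nat.cast_nonneg _)
    _ < ⊤ := ENNReal.mul_lt_top (by finiteness) hB.measure_lt_top

lemma hausdorffMeasure_sphere_lt_top [Nontrivial E] :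
    μH[(finrank ℝ E : ℝ) - 1] (sphere (0 : E) 1) < ⊤ := by
  obtain ⟨v, hv⟩ := exists_norm_eq E zero_le_one
  refine (measure_mono fun x hx ↦ ?_).trans_lt <| measure_union_lt_top
    (hausdorffMeasure_hemisphere_lt_top hv)
    (hausdorffMeasure_hemisphere_lt_top ((norm_neg v).trans hv))
  rw [mem_sphere_zero_iff_norm] at hx
  rcases le_total ⟪v, x⟫_ℝ 0 with h | h
  · exact Or.inl ⟨hx, h⟩
  · exact Or.inr ⟨hx, by rwa [inner_neg_left, neg_nonpos]⟩

end HausdorffMeasure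

theorem re_pow_integral_sphere_tendsto_zero_general {E : Type*}
    [NormedAddCommGroup E] [InnerProductSpace ℝ E] [FiniteDimensional ℝ E] [MeasurableSpace E]
    [BorelSpace E] {s : E} (hs : s ≠ 0) :
    Tendsto (fun ε : ℝ ↦ ∫ ω in sphere (0 : E) 1,
        ((⟪s, ω⟫_ℝ : ℂ) - ε * Complex.I) ^ (-(finrank ℝ E : ℤ)) ∂μH[(finrank ℝ E : ℝ) - 1])
      (𝓝[>] 0) (𝓝 0) := by
  have : Nontrivial E := nontrivial_of_ne s 0 hs
  set μ := (μH[(finrank ℝ E : ℝ) - 1]).restrict (sphere (0 : E) 1)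
  have : IsFiniteMeasure μ := isFiniteMeasure_restrict.2 hausdorffMeasure_sphere_lt_top.ne
  have hcont : ContinuousAt
      (fun ε : ℝ ↦ ε / √(ε ^ 2 + ‖s‖ ^ 2) ^ (finrank ℝ E + 1) * μ.real univ) 0 := by
    have : √((0 : ℝ) ^ 2 + ‖s‖ ^ 2) ^ (finrank ℝ E + 1) ≠ 0 := by positivity
    fun_prop (disch := assumption)
  have hlim : Tendsto (fun ε : ℝ ↦ ε / √(ε ^ 2 + ‖s‖ ^ 2) ^ (finrank ℝ E + 1) * μ.real univ)
      (𝓝[>] 0) (𝓝 0) := by simpa using hcont.tendsto.mono_left nhdsWithin_le_nhds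
  rw [tendsto_zero_iff_norm_tendsto_zero]
  refine hlim.congr' ?_
  filter_upwards [self_mem_nhdsWithin] with ε hε
  exact ((isUniformOnSphere_hausdorffMeasure_restrict _).norm_integral_inner_sub_mul_I_zpow s
    hε).symm

/-- Instance of Theorem A.20 of [Pa16]: for `s ≠ 0`, the real part of
`iᵐ ∫_{Sᵐ⁻¹} (⟪s, ω⟫ − iε)^{−m} dμ(ω)` (with `μ` the `(m−1)`-dimensional
Hausdorff measure on the unit sphere) tends to `0` as `ε → 0⁺`. -/
theorem re_pow_integral_sphere_tendsto_zero (m : ℕ) (hm : 1 ≤ m)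
    (s : EuclideanSpace ℝ (Fin m)) (hs : s ≠ 0)
    (μ : Measure (EuclideanSpace ℝ (Fin m)))
    (hμ : μ = (MeasureTheory.Measure.hausdorffMeasure ((m : ℝ) - 1)).restrict
      {ω : EuclideanSpace ℝ (Fin m) | ‖ω‖ = 1}) :
    Tendsto (fun ε : ℝ =>
        (Complex.I ^ m *
          ∫ ω in {ω : EuclideanSpace ℝ (Fin m) | ‖ω‖ = 1},
            ((⟪s, ω⟫_ℝ : ℂ) - (ε : ℂ) * Complex.I) ^ (-(m : ℤ)) ∂μ).re)
      (𝓝[>] (0 : ℝ)) (𝓝 0) := by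
  have hsphere : {ω : EuclideanSpace ℝ (Fin m) | ‖ω‖ = 1} = sphere 0 1 := by ext; simp
  have hlim := (re_pow_integral_sphere_tendsto_zero_general hs).const_mul (Complex.I ^ m)
  rw [hμ, hsphere, Measure.restrict_restrict isClosed_sphere.measurableSet, inter_self]
  simpa [Function.comp_def] using (Complex.continuous_re.tendsto _).comp hlim
end
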